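/- For every r ≥ 2 there exists a constant c > 0 such that every graph G of sufficiently large order n with μ(G) > μ(T_r(n)) contains at least c·n distinct cliques of order r+1 all sharing a common clique of order r. -/

import Mathlib

/-!
Write `t = 1 - 1 / r`. If the vertices of an `(r + 1)`-clique all have degree at least `(t - ε) m`,
where `m` is the order of the graph and `ε = 1 / (4 (r + 1))`, their degree sum exceeds `(r - 1) m`
by a positive fraction of `m`; hence linearly many vertices see `r` of its members, and some
`r`-subclique lies in linearly many `(r + 1)`-cliques (`book_of_clique`). So it is enough to find
an `(r + 1)`-clique in an induced subgraph of linear order and large minimum degree.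

If the minimum degree of `G` is already large, the clique comes from the spectral Turán theorem
(`spectral_turan`): Erdős's majorisation, with a leading eigenvector as weights, turns a graph
without `(r + 1)`-cliques into an `r`-partite one, for which `∑ k i / (μ + k i) ≥ 1` in terms of the
class sizes `k i`; by concavity the same inequality holds for the balanced class sizes, and this
says `μ ≤ μ(T_r(n))`.

Otherwise the vertex where the leading eigenvector is smallest is deleted. Low minimum degree
makes that entry so small that `μ - t m` increases by a fixed amount (`deletion`), which outweighs
the error `μ(T_r(n)) ≥ t n - r / n`. From then on `μ > t m`, and deletion continues as long as the
minimum degree is low. Since `μ ≤ m`, this ends with `m` still linear in `n`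
(`book_of_surplus`), and there Wilf's bound `μ ≤ t m` for graphs without `(r + 1)`-cliques
(`wilf`) provides the clique.
-/

/-- The largest adjacency eigenvalue of a finite simple graph. -/
noncomputable def SimpleGraph.specMax {V : Type*} [Fintype V] [DecidableEq V]
    (G : SimpleGraph V) : ℝ :=
  letI := Classical.decRel G.Adj
  ⨆ i, (Matrix.IsHermitian.eigenvalues
    (A := G.adjMatrix ℝ)
    (by rw [Matrix.IsHermitian, Matrix.conjTranspose_eq_transpose_of_trivial]
        exact SimpleGraph.isSymm_adjMatrix G)) i

namespace SpectralBook

open Finset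

open Classical in
/-- The `(u, v)` entry of the real adjacency matrix of `G`. -/
noncomputable def ind {V : Type*} (G : SimpleGraph V) (u v : V) : ℝ := if G.Adj u v then 1 else 0

lemma ind_symm {V : Type*} (G : SimpleGraph V) (u v : V) : ind G u v = ind G v u := by
  classical
  unfold ind; exact if_congr (G.adj_comm u v) rfl rfl

lemma ind_self {V : Type*} (G : SimpleGraph V) (u : V) : ind G u u = 0 := by simp [ind]

lemma ind_nonneg {V : Type*} (G : SimpleGraph V) (u v : V) : 0 ≤ ind G u v := by
  unfold ind; split_ifs <;> norm_num

lemma ind_le_one {V : Type*} (G : SimpleGraph V) (u v : V) : ind G u v ≤ 1 := by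
  unfold ind; split_ifs <;> norm_num

lemma ind_sq {V : Type*} (G : SimpleGraph V) (u v : V) : ind G u v * ind G u v = ind G u v := by
  unfold ind; split_ifs <;> norm_num

/-! ### Rayleigh quotients and the leading eigenvector -/

section Matrix

open Matrix

lemma inner_eigen {n : Type*} [Fintype n] [DecidableEq n] {A : Matrix n n ℝ} (hA : A.IsHermitian)
    (x : n → ℝ) (i : n) :
    (A *ᵥ x) ⬝ᵥ ⇑(hA.eigenvectorBasis i) = hA.eigenvalues i * (x ⬝ᵥ ⇑(hA.eigenvectorBasis i)) := by
  have h1 : (A *ᵥ x) ⬝ᵥ ⇑(hA.eigenvectorBasis i) = x ⬝ᵥ (A *ᵥ ⇑(hA.eigenvectorBasis i)) := by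
    have hT : Aᵀ = A := by
      have := hA
      rwa [IsHermitian, conjTranspose_eq_transpose_of_trivial] at this
    rw [dotProduct_mulVec, ← mulVec_transpose, hT]
  rw [h1, hA.mulVec_eigenvectorBasis, dotProduct_smul, smul_eq_mul]

lemma matrix_rayleigh {n : Type*} [Fintype n] [DecidableEq n] {A : Matrix n n ℝ}
    (hA : A.IsHermitian) (x : n → ℝ) :
    x ⬝ᵥ (A *ᵥ x) ≤ (⨆ i, hA.eigenvalues i) * (x ⬝ᵥ x) := by
  have key := hA.eigenvectorBasis.sum_inner_mul_inner (WithLp.toLp 2 x) (WithLp.toLp 2 (A *ᵥ x))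
  have key2 := hA.eigenvectorBasis.sum_inner_mul_inner (WithLp.toLp 2 x) (WithLp.toLp 2 x)
  simp only [EuclideanSpace.inner_eq_star_dotProduct, star_trivial] at key key2
  rw [dotProduct_comm, ← key, ← key2, Finset.mul_sum]
  refine Finset.sum_le_sum fun i _ => ?_
  rw [inner_eigen hA x i, dotProduct_comm _ x]
  have : hA.eigenvalues i ≤ ⨆ i, hA.eigenvalues i :=
    le_ciSup (Set.finite_range _).bddAbove i
  nlinarith [mul_le_mul_of_nonneg_right this (mul_self_nonneg (x ⬝ᵥ ⇑(hA.eigenvectorBasis i)))]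

lemma matrix_exists_eigen {n : Type*} [Fintype n] [DecidableEq n] [Nonempty n] {A : Matrix n n ℝ}
    (hA : A.IsHermitian) :
    ∃ x : n → ℝ, x ⬝ᵥ x = 1 ∧ A *ᵥ x = (⨆ i, hA.eigenvalues i) • x := by
  obtain ⟨i, hi⟩ := exists_eq_ciSup_of_finite (f := hA.eigenvalues)
  refine ⟨⇑(hA.eigenvectorBasis i), ?_, ?_⟩
  · have := hA.eigenvectorBasis.orthonormal.1 i
    have h2 : inner ℝ (hA.eigenvectorBasis i) (hA.eigenvectorBasis i) = (1 : ℝ) := by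
      rw [real_inner_self_eq_norm_sq, this]; norm_num
    rwa [EuclideanSpace.inner_eq_star_dotProduct, star_trivial] at h2
  · rw [hA.mulVec_eigenvectorBasis, hi]

end Matrix

section Spec

variable {V : Type*} [Fintype V] [DecidableEq V]

lemma rayleigh (G : SimpleGraph V) (x : V → ℝ) :
    ∑ u, x u * ∑ v, ind G u v * x v ≤ G.specMax * ∑ u, x u ^ 2 := by
  let _ := Classical.decRel G.Adj
  have hA : (G.adjMatrix ℝ).IsHermitian := by
    rw [Matrix.IsHermitian, Matrix.conjTranspose_eq_transpose_of_trivial]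
    exact SimpleGraph.isSymm_adjMatrix G
  have := matrix_rayleigh hA x
  have e : (⨆ i, hA.eigenvalues i) = G.specMax := rfl
  rw [e] at this
  have e1 : ∑ u, x u * ∑ v, ind G u v * x v = x ⬝ᵥ (Matrix.mulVec (G.adjMatrix ℝ) x) := by
    simp only [dotProduct, Matrix.mulVec, SimpleGraph.adjMatrix_apply, ind]
  have e2 : ∑ u, x u ^ 2 = x ⬝ᵥ x := by simp only [dotProduct, pow_two]
  rw [e1, e2]
  exact this

/-- Weak form of Perron–Frobenius: the entrywise absolute value of a leading eigenvector is
nonnegative, normalised and subharmonic, and it satisfies the eigenvalue equation on its support,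
because it attains the maximum of the Rayleigh quotient. -/
lemma exists_perron [Nonempty V] (G : SimpleGraph V) :
    ∃ y : V → ℝ, (∀ u, 0 ≤ y u) ∧ ∑ u, y u ^ 2 = 1 ∧
      (∀ u, G.specMax * y u ≤ ∑ v, ind G u v * y v) ∧
      ∀ u, y u * ∑ v, ind G u v * y v = G.specMax * y u ^ 2 := by
  obtain ⟨x, hx1, hx2⟩ : ∃ x : V → ℝ, ∑ u, x u ^ 2 = 1 ∧
      ∀ u, ∑ v, ind G u v * x v = G.specMax * x u := by
    let _ := Classical.decRel G.Adj
    have hA : (G.adjMatrix ℝ).IsHermitian := by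
      rw [Matrix.IsHermitian, Matrix.conjTranspose_eq_transpose_of_trivial]
      exact SimpleGraph.isSymm_adjMatrix G
    obtain ⟨x, h1, h2⟩ := matrix_exists_eigen hA
    have e : (⨆ i, hA.eigenvalues i) = G.specMax := rfl
    rw [e] at h2
    refine ⟨x, by simpa [dotProduct, pow_two] using h1, fun u => ?_⟩
    have := congrFun h2 u
    simp only [Matrix.mulVec, dotProduct, SimpleGraph.adjMatrix_apply, Pi.smul_apply,
      smul_eq_mul] at this
    rw [← this]
    refine sum_congr rfl fun v _ => ?_
    unfold ind
    congr
  have hsub : ∀ u, G.specMax * |x u| ≤ ∑ v, ind G u v * |x v| := by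
    intro u
    have hpos : ∀ v, ind G u v * |x v| = |ind G u v * x v| := fun v => by
      rw [abs_mul, abs_of_nonneg (ind_nonneg G u v)]
    simp only [hpos]
    calc G.specMax * |x u| ≤ |G.specMax| * |x u| :=
          mul_le_mul_of_nonneg_right (le_abs_self _) (abs_nonneg _)
      _ = |∑ v, ind G u v * x v| := by rw [hx2, abs_mul]
      _ ≤ _ := abs_sum_le_sum_abs _ _
  refine ⟨fun u => |x u|, fun u => abs_nonneg _, by simpa using hx1, hsub, ?_⟩
  have hR := rayleigh G (fun u => |x u|)
  have hle : ∀ u ∈ univ, G.specMax * |x u| ^ 2 ≤ |x u| * ∑ v, ind G u v * |x v| := fun u _ => by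
    have := mul_le_mul_of_nonneg_left (hsub u) (abs_nonneg (x u))
    nlinarith
  have heq : ∑ u, G.specMax * |x u| ^ 2 = ∑ u, |x u| * ∑ v, ind G u v * |x v| :=
    le_antisymm (sum_le_sum hle) (by rw [← mul_sum]; exact hR)
  intro u
  exact ((sum_eq_sum_iff_of_le hle).1 heq u (mem_univ u)).symm

lemma specMax_le_card (G : SimpleGraph V) [Nonempty V] : G.specMax ≤ Fintype.card V := by
  obtain ⟨y, h0, h1, h2, h3⟩ := exists_perron G
  have e : G.specMax = ∑ u, y u * ∑ v, ind G u v * y v := by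
    simp only [h3, ← mul_sum, h1, mul_one]
  have h : ∑ u, y u * ∑ v, ind G u v * y v ≤ ∑ u, y u * ∑ v, y v := by
    gcongr with u _ v _
    · exact h0 u
    · exact mul_le_of_le_one_left (h0 v) (ind_le_one G u v)
  rw [← sum_mul, ← pow_two] at h
  have h4 := sq_sum_le_card_mul_sum_sq (s := (univ : Finset V)) (f := y)
  rw [h1, mul_one] at h4
  rw [e]
  simpa using h.trans h4

end Spec

/-! ### The spectral Turán theorem -/

/-- Weighted form of Erdős's degree majorisation: a graph without `(r + 1)`-cliques inside `U` is
dominated, in all weighted degrees simultaneously, by a complete `r`-partite graph on `U`. The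
neighbourhood of a vertex of maximum weighted degree contains no `r`-clique, and everything outside
it is made into one new part. -/
lemma majorization {V : Type*} [DecidableEq V] (G : SimpleGraph V) (x : V → ℝ) (hx : ∀ v, 0 ≤ x v)
    (r : ℕ) : ∀ U : Finset V, (∀ s ⊆ U, ¬ G.IsNClique (r + 1) s) →
      ∃ f : V → ℕ, (∀ v ∈ U, f v < r) ∧
        ∀ u ∈ U, ∑ v ∈ U, ind G u v * x v ≤ ∑ v ∈ U with f v ≠ f u, x v := by
  classical
  induction r with
  | zero =>
    intro U hU
    have : U = ∅ := by
      by_contra h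
      obtain ⟨a, ha⟩ := nonempty_iff_ne_empty.2 h
      exact hU {a} (by simpa using ha) (by simp)
    subst this
    exact ⟨fun _ => 0, by simp, by simp⟩
  | succ r ih =>
    intro U hU
    rcases U.eq_empty_or_nonempty with rfl | hne
    · exact ⟨fun _ => 0, by simp, by simp⟩
    obtain ⟨v0, hv0, hmax⟩ := exists_max_image U (fun u => ∑ v ∈ U, ind G u v * x v) hne
    obtain ⟨f, hf1, hf2⟩ := ih (U.filter (G.Adj v0)) (by
      intro s hs hc
      refine hU (insert v0 s) ?_ (hc.insert fun b hb => (mem_filter.1 (hs hb)).2)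
      intro b hb
      rcases mem_insert.1 hb with rfl | hb
      · exact hv0
      · exact (mem_filter.1 (hs hb)).1)
    refine ⟨fun v => if G.Adj v0 v then f v else r, ?_, ?_⟩
    · intro v hv
      dsimp only
      split_ifs with h
      · exact (hf1 v (mem_filter.2 ⟨hv, h⟩)).trans (Nat.lt_succ_self r)
      · exact Nat.lt_succ_self r
    · intro u hu
      by_cases h : G.Adj v0 u
      · rw [← sum_filter_add_sum_filter_not U (G.Adj v0) fun v => ind G u v * x v]
        rw [← sum_filter_add_sum_filter_not (U.filter _) (G.Adj v0) x]
        refine add_le_add ?_ ?_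
        · refine (hf2 u (mem_filter.2 ⟨hu, h⟩)).trans (le_of_eq ?_)
          refine sum_congr ?_ fun _ _ => rfl
          ext v
          simp only [mem_filter, h, if_true]
          constructor
          · rintro ⟨⟨a, b⟩, c⟩; refine ⟨⟨a, ?_⟩, b⟩; simpa [b] using c
          · rintro ⟨⟨a, c⟩, b⟩; refine ⟨⟨a, b⟩, ?_⟩; simpa [b] using c
        · have : (U.filter fun v => (if G.Adj v0 v then f v else r) ≠
              (if G.Adj v0 u then f u else r)).filter (fun v => ¬ G.Adj v0 v)
              = U.filter (fun v => ¬ G.Adj v0 v) := by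
            ext v
            simp only [mem_filter, h, if_true]
            constructor
            · rintro ⟨⟨a, c⟩, b⟩; exact ⟨a, b⟩
            · rintro ⟨a, b⟩
              refine ⟨⟨a, ?_⟩, b⟩
              have := hf1 u (mem_filter.2 ⟨hu, h⟩)
              simp only [b, if_false]
              omega
          rw [this]
          exact sum_le_sum fun v _ => mul_le_of_le_one_left (hx v) (ind_le_one G u v)
      · refine (hmax u hu).trans (le_of_eq ?_)
        rw [sum_filter]
        refine sum_congr rfl fun v hv => ?_
        simp only [h, if_false]
        by_cases h' : G.Adj v0 v
        · have := (hf1 v (mem_filter.2 ⟨hv, h'⟩)).ne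
          simp [ind, h', this]
        · simp [ind, h']

/-- The characteristic inequality: if `G` has no `(r + 1)`-clique then the class sizes `k i` of
some `r`-partition satisfy `∑ k i / (μ + k i) ≥ 1`, where `μ = μ(G)`. -/
lemma exists_parts {V : Type*} [Fintype V] [DecidableEq V] [Nonempty V] (G : SimpleGraph V) (r : ℕ)
    (hG : ∀ s, ¬ G.IsNClique (r + 1) s) (hμ : 0 < G.specMax) :
    ∃ k : ℕ → ℕ, ∑ i ∈ range r, k i = Fintype.card V ∧
      1 ≤ ∑ i ∈ range r, (k i : ℝ) / (G.specMax + k i) := by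
  obtain ⟨y, h0, h1, h2, h3⟩ := exists_perron G
  obtain ⟨f, hf1, hf2⟩ := majorization G y h0 r univ fun s _ => hG s
  have hmaps : ∀ v ∈ (univ : Finset V), f v ∈ range r := fun v hv => mem_range.2 (hf1 v hv)
  refine ⟨fun i => #{v | f v = i}, (card_eq_sum_card_fiberwise hmaps).symm, ?_⟩
  set S := ∑ v, y v with hS
  have hSpos : 0 < S := by
    have hnn : 0 ≤ S := sum_nonneg fun v _ => h0 v
    refine lt_of_le_of_ne hnn fun h => ?_
    have hz := (sum_eq_zero_iff_of_nonneg fun v _ => h0 v).1 h.symm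
    have : ∑ u, y u ^ 2 = 0 := sum_eq_zero fun u hu => by rw [hz u hu]; norm_num
    linarith
  have hpart : ∀ i ∈ range r, ∑ v with f v = i, y v ≤
      S * ((#{v | f v = i} : ℝ) / (G.specMax + #{v | f v = i})) := by
    intro i _
    have hsplit : ∀ u, f u = i → G.specMax * y u ≤ S - ∑ v with f v = i, y v := by
      intro u hu
      have := (h2 u).trans (hf2 u (mem_univ u))
      rw [hu] at this
      have e := sum_filter_add_sum_filter_not univ (fun v => f v = i) y
      linarith
    have hsum : ∑ u with f u = i, G.specMax * y u ≤
        ∑ u with f u = i, (S - ∑ v with f v = i, y v) :=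
      sum_le_sum fun u hu => hsplit u (mem_filter.1 hu).2
    rw [← mul_sum, sum_const, nsmul_eq_mul] at hsum
    have hk : (0 : ℝ) ≤ #{v | f v = i} := Nat.cast_nonneg _
    rw [← mul_div_assoc, le_div_iff₀ (by linarith)]
    nlinarith
  have htot : S = ∑ i ∈ range r, ∑ v with f v = i, y v := (sum_fiberwise_of_maps_to hmaps y).symm
  have := sum_le_sum hpart
  rw [← htot, ← mul_sum] at this
  by_contra! hlt
  nlinarith

/-- Wilf's bound. -/
lemma wilf {V : Type*} [Fintype V] [DecidableEq V] [Nonempty V] (G : SimpleGraph V) (r : ℕ)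
    (hr : 2 ≤ r) (hG : ∀ s, ¬ G.IsNClique (r + 1) s) :
    G.specMax ≤ (1 - 1 / (r : ℝ)) * Fintype.card V := by
  have hr' : (2 : ℝ) ≤ r := by exact_mod_cast hr
  have hr1 : 1 / (r : ℝ) ≤ 1 := by rw [div_le_one (by linarith)]; linarith
  rcases le_or_gt G.specMax 0 with hμ | hμ
  · exact hμ.trans (mul_nonneg (by linarith) (Nat.cast_nonneg _))
  obtain ⟨k, hk1, hk2⟩ := exists_parts G r hG hμ
  set μ := G.specMax
  set n : ℝ := (Fintype.card V : ℝ) with hn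
  have hn0 : 0 ≤ n := Nat.cast_nonneg _
  have hk1' : ∑ i ∈ range r, (k i : ℝ) = n := by rw [hn, ← hk1]; push_cast; rfl
  set p : ℝ := n / r with hp
  have hrp : r * p = n := by rw [hp]; field_simp
  have hp0 : 0 ≤ p := by positivity
  -- tangent line at the mean part size `p`
  have htan : ∀ i ∈ range r, (k i : ℝ) / (μ + k i) ≤
      p / (μ + p) + (μ / (μ + p) ^ 2) * (k i - p) := by
    intro i _
    have hki : (0 : ℝ) ≤ k i := Nat.cast_nonneg _
    have e : p / (μ + p) + (μ / (μ + p) ^ 2) * (k i - p) - (k i : ℝ) / (μ + k i) =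
        μ * (k i - p) ^ 2 / ((μ + p) ^ 2 * (μ + k i)) := by
      field_simp
      ring
    have : 0 ≤ μ * (k i - p) ^ 2 / ((μ + p) ^ 2 * (μ + k i)) := by positivity
    linarith
  have hs := hk2.trans (sum_le_sum htan)
  rw [sum_add_distrib, ← mul_sum, sum_sub_distrib, hk1'] at hs
  simp only [sum_const, card_range, nsmul_eq_mul] at hs
  rw [hrp, sub_self, mul_zero, add_zero, ← mul_div_assoc, hrp, le_div_iff₀ (by positivity)] at hs
  have : (1 - 1 / (r : ℝ)) * n = n - p := by rw [hp]; ring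
  linarith

lemma turan_part_card (n r : ℕ) (hr : 0 < r) (i : ℕ) (hi : i < r) :
    #{v : Fin n | (v : ℕ) % r = i} = n / r ∨ #{v : Fin n | (v : ℕ) % r = i} = n / r + 1 := by
  have h := Nat.count_modEq_card n hr i
  rw [Nat.count_eq_card_filter_range] at h
  have e : #{v : Fin n | (v : ℕ) % r = i} = #{x ∈ range n | x ≡ i [MOD r]} := by
    simp only [card_filter, Nat.ModEq, Nat.mod_eq_of_lt hi]
    exact Fin.sum_univ_eq_sum_range (fun x => if x % r = i then 1 else 0) n
  rw [e, h]
  split_ifs <;> simp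

lemma turan_ind_sum (n r : ℕ) (g : ℕ → ℝ) (u : Fin n) (hr : 0 < r) :
    ∑ v, ind (SimpleGraph.turanGraph n r) u v * g ((v : ℕ) % r) =
      ∑ i ∈ range r, (#{v : Fin n | (v : ℕ) % r = i} : ℝ) * g i -
        #{v : Fin n | (v : ℕ) % r = (u : ℕ) % r} * g ((u : ℕ) % r) := by
  have h1 : ∑ v : Fin n, g ((v : ℕ) % r) =
      ∑ i ∈ range r, (#{v : Fin n | (v : ℕ) % r = i} : ℝ) * g i := by
    rw [← sum_fiberwise_of_maps_to (s := univ) (t := range r) (g := fun v : Fin n => (v : ℕ) % r)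
      (fun v _ => mem_range.2 (Nat.mod_lt _ hr))]
    refine sum_congr rfl fun i _ => ?_
    rw [sum_congr rfl (g := fun _ => g i) (fun v hv => by rw [(mem_filter.1 hv).2])]
    simp
  have h2 : (#{v : Fin n | (v : ℕ) % r = (u : ℕ) % r} : ℝ) * g ((u : ℕ) % r) =
      ∑ v with (v : Fin n) % r = (u : ℕ) % r, g ((v : ℕ) % r) := by
    rw [sum_congr rfl (g := fun _ => g ((u : ℕ) % r))
      (fun v hv => by rw [(mem_filter.1 hv).2])]
    simp
  rw [← h1, h2, sum_filter, ← sum_sub_distrib]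
  refine sum_congr rfl fun v _ => ?_
  simp only [ind, SimpleGraph.turanGraph_adj]
  by_cases h : (v : ℕ) % r = (u : ℕ) % r
  · simp [h]
  · simp [h, Ne.symm h]

lemma turan_card_sum (n r : ℕ) (hr : 0 < r) :
    ∑ i ∈ range r, #{v : Fin n | (v : ℕ) % r = i} = n := by
  have := card_eq_sum_card_fiberwise (s := (univ : Finset (Fin n))) (t := range r)
    (f := fun v : Fin n => (v : ℕ) % r) (fun v _ => mem_coe.2 (mem_range.2 (Nat.mod_lt _ hr)))
  simpa using this.symm

/-- The vector `1 / (μ + t i)` on the `i`-th class of the Turán graph, with `t i` the class sizes,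
certifies `μ ≤ μ(T_r(n))` as soon as `∑ t i / (μ + t i) ≥ 1`. -/
lemma le_specMax_turan (n r : ℕ) (hn : 0 < n) (hr : 0 < r) (μ : ℝ) (hμ : 0 < μ)
    (h : 1 ≤ ∑ i ∈ range r, (#{v : Fin n | (v : ℕ) % r = i} : ℝ) /
      (μ + #{v : Fin n | (v : ℕ) % r = i})) :
    μ ≤ (SimpleGraph.turanGraph n r).specMax := by
  set t : ℕ → ℝ := fun i => (#{v : Fin n | (v : ℕ) % r = i} : ℝ) with ht
  have ht0 : ∀ i, 0 ≤ t i := fun i => Nat.cast_nonneg _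
  set g : ℕ → ℝ := fun i => 1 / (μ + t i) with hg
  have hg0 : ∀ i, 0 < g i := fun i => by have := ht0 i; simp only [hg]; positivity
  have hR := rayleigh (SimpleGraph.turanGraph n r) (fun v => g ((v : ℕ) % r))
  have hpt : ∀ u : Fin n, μ * g ((u : ℕ) % r) ≤
      ∑ v, ind (SimpleGraph.turanGraph n r) u v * g ((v : ℕ) % r) := by
    intro u
    rw [turan_ind_sum n r g u hr]
    change _ ≤ ∑ i ∈ range r, t i * g i - t ((u : ℕ) % r) * g ((u : ℕ) % r)
    have e1 : ∑ i ∈ range r, t i * g i = ∑ i ∈ range r, t i / (μ + t i) :=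
      sum_congr rfl fun i _ => by simp only [hg]; ring
    have e2 : (μ + t ((u : ℕ) % r)) * g ((u : ℕ) % r) = 1 := by
      have := ht0 ((u : ℕ) % r)
      simp only [hg]
      field_simp
    have h' : 1 ≤ ∑ i ∈ range r, t i / (μ + t i) := h
    linarith
  have h1 : μ * ∑ u : Fin n, g ((u : ℕ) % r) ^ 2 ≤
      ∑ u : Fin n, g ((u : ℕ) % r) *
        ∑ v, ind (SimpleGraph.turanGraph n r) u v * g ((v : ℕ) % r) := by
    rw [mul_sum]
    refine sum_le_sum fun u _ => ?_
    have := mul_le_mul_of_nonneg_left (hpt u) (hg0 ((u : ℕ) % r)).le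
    nlinarith
  have hpos : 0 < ∑ u : Fin n, g ((u : ℕ) % r) ^ 2 :=
    sum_pos (fun u _ => pow_pos (hg0 _) 2) ⟨⟨0, hn⟩, mem_univ _⟩
  exact le_of_mul_le_mul_right (h1.trans hR) hpos

/-- The spectral Turán theorem. Concavity of `k ↦ k / (μ + k)` enters through the chord over
`[q, q + 1]`, `q = n / r`, which lies above the function at every integer. -/
lemma spectral_turan {V : Type*} [Fintype V] [DecidableEq V] [Nonempty V] (G : SimpleGraph V)
    (r : ℕ) (hr : 2 ≤ r) (hG : ∀ s, ¬ G.IsNClique (r + 1) s) (hμ : 0 < G.specMax) :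
    G.specMax ≤ (SimpleGraph.turanGraph (Fintype.card V) r).specMax := by
  obtain ⟨k, hk1, hk2⟩ := exists_parts G r hG hμ
  refine le_specMax_turan _ r Fintype.card_pos (by omega) _ hμ (hk2.trans ?_)
  set μ := G.specMax
  set n := Fintype.card V
  set q : ℝ := ((n / r : ℕ) : ℝ) with hq
  have hq0 : 0 ≤ q := Nat.cast_nonneg _
  have hchord : ∀ i ∈ range r, (k i : ℝ) / (μ + k i) ≤
      q / (μ + q) + ((k i : ℝ) - q) * (μ / ((μ + q) * (μ + q + 1))) := by
    intro i _
    have hki : (0 : ℝ) ≤ k i := Nat.cast_nonneg _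
    have e : q / (μ + q) + ((k i : ℝ) - q) * (μ / ((μ + q) * (μ + q + 1))) -
        (k i : ℝ) / (μ + k i) =
        μ * ((k i - q) * (k i - q - 1)) / ((μ + q) * (μ + q + 1) * (μ + k i)) := by
      field_simp
      ring
    have hprod : 0 ≤ ((k i : ℝ) - q) * (k i - q - 1) := by
      rcases le_or_gt (k i) (n / r) with h | h
      · have : (k i : ℝ) ≤ q := by rw [hq]; exact_mod_cast h
        nlinarith
      · have : q + 1 ≤ (k i : ℝ) := by rw [hq]; exact_mod_cast h
        nlinarith
    have : 0 ≤ μ * ((k i - q) * (k i - q - 1)) / ((μ + q) * (μ + q + 1) * (μ + k i)) := by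
      positivity
    linarith
  have heq : ∀ i ∈ range r, (#{v : Fin n | (v : ℕ) % r = i} : ℝ) /
      (μ + #{v : Fin n | (v : ℕ) % r = i}) =
      q / (μ + q) + ((#{v : Fin n | (v : ℕ) % r = i} : ℝ) - q) *
        (μ / ((μ + q) * (μ + q + 1))) := by
    intro i hi
    rcases turan_part_card n r (by omega) i (mem_range.1 hi) with h | h
    · rw [h]; simp [hq]
    · rw [h]; push_cast; rw [← hq]
      field_simp
      ring
  rw [sum_congr rfl heq]
  refine (sum_le_sum hchord).trans (le_of_eq ?_)
  rw [sum_add_distrib, sum_add_distrib, ← sum_mul, ← sum_mul, sum_sub_distrib, sum_sub_distrib]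
  have h1 : ∑ i ∈ range r, (k i : ℝ) = n := by rw [← hk1]; push_cast; rfl
  have h2 : ∑ i ∈ range r, (#{v : Fin n | (v : ℕ) % r = i} : ℝ) = n := by
    exact_mod_cast turan_card_sum n r (by omega)
  rw [h1, h2]

/-- Lower bound on `μ(T_r(n))` from the all-ones vector. -/
lemma turan_lower (n r : ℕ) (hn : 0 < n) (hr : 2 ≤ r) :
    (1 - 1 / (r : ℝ)) * n - r / n ≤ (SimpleGraph.turanGraph n r).specMax := by
  have hR := rayleigh (SimpleGraph.turanGraph n r) (fun _ => 1)
  set t : ℕ → ℝ := fun i => (#{v : Fin n | (v : ℕ) % r = i} : ℝ) with ht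
  have hr' : (0 : ℝ) < r := by positivity
  have hn' : (0 : ℝ) < n := by positivity
  have h2 : ∑ i ∈ range r, t i = n := by
    simp only [ht]
    exact_mod_cast turan_card_sum n r (by omega)
  have hrow : ∀ u : Fin n, ∑ v, ind (SimpleGraph.turanGraph n r) u v * (1 : ℝ) =
      n - t ((u : ℕ) % r) := by
    intro u
    have := turan_ind_sum n r (fun _ => 1) u (by omega)
    simp only [mul_one] at this ⊢
    rw [this]
    change ∑ i ∈ range r, t i - t _ = _
    rw [h2]
  have hsq : ∑ u : Fin n, t ((u : ℕ) % r) = ∑ i ∈ range r, t i * t i := by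
    rw [← sum_fiberwise_of_maps_to (s := univ) (t := range r) (g := fun v : Fin n => (v : ℕ) % r)
      (fun v _ => mem_range.2 (Nat.mod_lt _ (by omega)))]
    refine sum_congr rfl fun i _ => ?_
    rw [sum_congr rfl (g := fun _ => t i) (fun v hv => by rw [(mem_filter.1 hv).2])]
    simp [ht]
  have hdev : ∀ i ∈ range r, t i * t i ≤ 2 * (n / r) * t i - (n / r : ℝ) ^ 2 + 1 := by
    intro i hi
    have hlo : ((n / r : ℕ) : ℝ) ≤ n / r := Nat.cast_div_le
    have hhi : (n / r : ℝ) ≤ ((n / r : ℕ) : ℝ) + 1 := by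
      rw [div_le_iff₀ hr']
      have := Nat.lt_mul_div_succ n (show 0 < r by omega)
      have : (n : ℝ) < r * ((n / r : ℕ) + 1) := by exact_mod_cast this
      linarith
    have : |t i - n / r| ≤ 1 := by
      rw [abs_le]
      rcases turan_part_card n r (by omega) i (mem_range.1 hi) with h | h
      · have : t i = ((n / r : ℕ) : ℝ) := by simp only [ht]; exact_mod_cast h
        constructor <;> linarith
      · have : t i = ((n / r : ℕ) : ℝ) + 1 := by simp only [ht]; exact_mod_cast h
        constructor <;> linarith
    nlinarith [abs_le.1 this, (sq_le_one_iff_abs_le_one _).2 this]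
  have hs := sum_le_sum hdev
  rw [sum_add_distrib, sum_sub_distrib, ← mul_sum, h2] at hs
  simp only [sum_const, card_range, nsmul_eq_mul, mul_one] at hs
  simp only [hrow, one_mul, one_pow, sum_sub_distrib, hsq] at hR
  simp only [sum_const, card_univ, Fintype.card_fin, nsmul_eq_mul, mul_one] at hR
  have e1 : 2 * (n / r : ℝ) * n - r * (n / r : ℝ) ^ 2 = n ^ 2 / r := by field_simp; ring
  have h3 : ((1 - 1 / (r : ℝ)) * n - r / n) * n ≤ (SimpleGraph.turanGraph n r).specMax * n := by
    have e2 : ((1 - 1 / (r : ℝ)) * n - r / n) * n = n * n - n ^ 2 / r - r := by field_simp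
    rw [e2]
    linarith
  exact le_of_mul_le_mul_right h3 hn'

/-! ### Books from large cliques of large degree -/

/-- `G` contains an `r`-clique that is contained in at least `b` cliques of order `r + 1`. -/
def HasBook {V : Type*} (G : SimpleGraph V) (r : ℕ) (b : ℝ) : Prop :=
  ∃ (K : Finset V) (S : Finset (Finset V)), G.IsNClique r K ∧
    b ≤ (S.card : ℝ) ∧ ∀ s ∈ S, G.IsNClique (r + 1) s ∧ K ⊆ s

lemma HasBook.mono {V : Type*} {G : SimpleGraph V} {r : ℕ} {b b' : ℝ} (h : HasBook G r b)
    (hb : b' ≤ b) : HasBook G r b' := by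
  obtain ⟨K, S, h1, h2, h3⟩ := h
  exact ⟨K, S, h1, hb.trans h2, h3⟩

lemma HasBook.of_comap {V W : Type*} {G : SimpleGraph V} (f : W ↪ V) {r : ℕ} {b : ℝ}
    (h : HasBook (G.comap f) r b) : HasBook G r b := by
  obtain ⟨K, S, h1, h2, h3⟩ := h
  have hle : (G.comap f).map f ≤ G := SimpleGraph.map_comap_le f G
  refine ⟨K.map f, S.map (mapEmbedding f).toEmbedding, h1.map.mono hle, by simpa using h2, ?_⟩
  intro s hs
  obtain ⟨s', hs', rfl⟩ := mem_map.1 hs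
  exact ⟨(h3 s' hs').1.map.mono hle, map_subset_map.2 (h3 s' hs').2⟩

/-- In an `(r + 1)`-clique of vertices of degree close to `(1 - 1 / r) m` or larger, a positive
fraction of all vertices sees at least `r` clique members, so by pigeonhole one of the `r + 1`
subcliques of order `r` has linearly many common neighbours. -/
lemma book_of_clique {V : Type*} [Fintype V] [DecidableEq V] (G : SimpleGraph V) (r : ℕ)
    (hr : 2 ≤ r) (K : Finset V) (hK : G.IsNClique (r + 1) K)
    (hdeg : ∀ u, (1 - 1 / (r : ℝ) - 1 / (4 * (r + 1))) * Fintype.card V ≤ ∑ v, ind G u v) :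
    HasBook G r (1 / (4 * (r + 1)) * Fintype.card V) := by
  classical
  set m : ℝ := (Fintype.card V : ℝ) with hm
  have hm0 : 0 ≤ m := Nat.cast_nonneg _
  have hr' : (2 : ℝ) ≤ r := by exact_mod_cast hr
  set C : V → Finset V := fun i => {v | ∀ j ∈ K.erase i, G.Adj v j} with hC
  have hcount : ∀ v, #{j ∈ K | G.Adj j v} ≤ #{i ∈ K | v ∈ C i} + (r - 1) := by
    intro v
    have hsplit := card_filter_add_card_filter_not (s := K) (fun j => G.Adj j v)
    rw [hK.card_eq] at hsplit
    by_cases h0 : #{j ∈ K | ¬ G.Adj j v} = 0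
    · have hall : ∀ j ∈ K, G.Adj j v := by
        intro j hj
        by_contra hn
        rw [card_eq_zero] at h0
        exact notMem_empty j (h0 ▸ mem_filter.2 ⟨hj, hn⟩)
      have : {i ∈ K | v ∈ C i} = K := by
        refine filter_true_of_mem fun i _ => ?_
        simp only [hC, mem_filter, mem_univ, true_and]
        exact fun j hj => (hall j (mem_of_mem_erase hj)).symm
      rw [this, hK.card_eq]
      omega
    by_cases h1 : #{j ∈ K | ¬ G.Adj j v} = 1
    · obtain ⟨i, hi⟩ := card_eq_one.1 h1
      have hiK : i ∈ {j ∈ K | ¬ G.Adj j v} := hi ▸ mem_singleton_self i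
      have : 0 < #{i ∈ K | v ∈ C i} := by
        refine card_pos.2 ⟨i, mem_filter.2 ⟨(mem_filter.1 hiK).1, ?_⟩⟩
        simp only [hC, mem_filter, mem_univ, true_and]
        intro j hj
        by_contra hn
        have : j ∈ {j ∈ K | ¬ G.Adj j v} :=
          mem_filter.2 ⟨mem_of_mem_erase hj, fun h => hn h.symm⟩
        rw [hi, mem_singleton] at this
        exact ne_of_mem_erase hj this
      omega
    · omega
  have hsumC : ∑ i ∈ K, #(C i) = ∑ v, #{i ∈ K | v ∈ C i} := by
    have := sum_card_bipartiteAbove_eq_sum_card_bipartiteBelow (s := K) (t := (univ : Finset V))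
      (fun i v => v ∈ C i)
    simp only [bipartiteAbove, bipartiteBelow] at this
    rw [← this]
    refine sum_congr rfl fun i _ => ?_
    simp
  have hsumD : ∑ i ∈ K, ∑ v, ind G i v = ∑ v, (#{j ∈ K | G.Adj j v} : ℝ) := by
    rw [sum_comm]
    refine sum_congr rfl fun v _ => ?_
    simp [ind]
  have hle : ∑ i ∈ K, ∑ v, ind G i v ≤ ∑ i ∈ K, (#(C i) : ℝ) + (r - 1) * m := by
    have h1 : ∑ v, #{j ∈ K | G.Adj j v} ≤ ∑ i ∈ K, #(C i) + Fintype.card V * (r - 1) := by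
      rw [hsumC]
      refine (sum_le_sum fun v _ => hcount v).trans (le_of_eq ?_)
      rw [sum_add_distrib]
      simp
    have h2 : (∑ v, (#{j ∈ K | G.Adj j v} : ℝ)) ≤
        ∑ i ∈ K, (#(C i) : ℝ) + m * ((r - 1 : ℕ) : ℝ) := by
      rw [hm]; exact_mod_cast h1
    rw [Nat.cast_sub (by omega), Nat.cast_one] at h2
    rw [hsumD]
    linarith
  have hlow : (r + 1 : ℝ) * ((1 - 1 / (r : ℝ) - 1 / (4 * (r + 1))) * m) ≤
      ∑ i ∈ K, ∑ v, ind G i v := by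
    have := card_nsmul_le_sum K _ _ fun i _ => hdeg i
    rw [hK.card_eq, nsmul_eq_mul] at this
    exact_mod_cast this
  have hval : (r + 1 : ℝ) * ((1 - 1 / (r : ℝ) - 1 / (4 * (r + 1))) * m) - (r - 1) * m =
      (3 / 4 - 1 / r) * m := by
    field_simp
    ring
  have hrinv : 1 / (r : ℝ) ≤ 1 / 2 := one_div_le_one_div_of_le (by norm_num) hr'
  have htot : 1 / 4 * m ≤ ∑ i ∈ K, (#(C i) : ℝ) := by
    have : 1 / 4 * m ≤ (3 / 4 - 1 / r) * m := mul_le_mul_of_nonneg_right (by linarith) hm0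
    linarith
  obtain ⟨i, hi, hbig⟩ : ∃ i ∈ K, 1 / (4 * (r + 1)) * m ≤ (#(C i) : ℝ) := by
    refine exists_le_of_sum_le (card_pos.1 (by rw [hK.card_eq]; omega)) (le_trans ?_ htot)
    rw [sum_const, hK.card_eq, nsmul_eq_mul]
    push_cast
    refine le_of_eq ?_
    field_simp
  have hKi : G.IsNClique r (K.erase i) := by simpa using hK.erase_of_mem hi
  have hnot : ∀ v ∈ C i, v ∉ K.erase i := fun v hv hvK =>
    G.irrefl ((mem_filter.1 hv).2 v hvK)
  refine ⟨K.erase i, (C i).image fun v => insert v (K.erase i), hKi, ?_, ?_⟩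
  · rw [card_image_of_injOn]
    · exact hbig
    · intro v hv w hw hvw
      have : v ∈ insert w (K.erase i) := by
        have h : insert v (K.erase i) = insert w (K.erase i) := hvw
        rw [← h]; exact mem_insert_self _ _
      rcases mem_insert.1 this with h | h
      · exact h
      · exact absurd h (hnot v hv)
  · intro s hs
    obtain ⟨v, hv, rfl⟩ := mem_image.1 hs
    exact ⟨hKi.insert (mem_filter.1 hv).2, subset_insert _ _⟩

/-! ### Deleting a vertex of smallest eigenvector entry -/

lemma deletion_arith (t ε s ν : ℝ) (ht : 1 / 2 ≤ t) (ht1 : t ≤ 1) (hε : 0 < ε) (hs0 : 0 ≤ s)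
    (hs : s ≤ t - ε) (hν : t - ε / 64 ≤ ν) (hν1 : ν ≤ 1) :
    ν * s ≤ (t - ε / 16) * (ν ^ 2 + s * (1 - s)) := by
  obtain ⟨a, rfl⟩ : ∃ a, ν = t + a := ⟨ν - t, by ring⟩
  have h1 : ε / 4 ≤ t * (t ^ 2 - s ^ 2) := by
    have : t * ε ≤ t ^ 2 - s ^ 2 := by nlinarith
    have h' : ε / 2 ≤ t ^ 2 - s ^ 2 := by nlinarith
    calc ε / 4 = 1 / 2 * (ε / 2) := by ring
      _ ≤ t * (t ^ 2 - s ^ 2) := by gcongr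
  have h2 : -(ε / 32) ≤ a * (2 * t ^ 2 - s) := by
    have : 0 ≤ 2 * t ^ 2 - s := by nlinarith
    have : 2 * t ^ 2 - s ≤ 2 := by nlinarith
    nlinarith
  have h3 : (t + a) ^ 2 + s * (1 - s) ≤ 2 := by nlinarith
  have h4 : 0 ≤ t * a ^ 2 := by positivity
  nlinarith

/-- Deleting the vertex `w` at which a leading eigenvector is smallest decreases `μ` by about
`μ * y w ^ 2`. When some vertex `u` has degree at most `(t - ε) m`, the eigenvalue inequality at `u`
and Cauchy–Schwarz force `y w ^ 2` to be below `1 / m` by a constant factor, so the loss is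
smaller than `t` by a constant. -/
lemma deletion {V : Type*} [Fintype V] [DecidableEq V] [Nonempty V] (G : SimpleGraph V)
    (t ε : ℝ) (ht : 1 / 2 ≤ t) (ht1 : t ≤ 1) (hε : 0 < ε)
    (hm : 32 / ε ≤ Fintype.card V) (hμ : t * Fintype.card V - ε / 64 ≤ G.specMax)
    (u : V) (hu : ∑ v, ind G u v ≤ (t - ε) * Fintype.card V) :
    ∃ w : V, G.specMax - t + ε / 32 ≤
      (G.comap (Function.Embedding.subtype fun v => v ≠ w)).specMax := by
  obtain ⟨y, h0, h1, h2, h3⟩ := exists_perron G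
  obtain ⟨w, -, hw⟩ := exists_min_image univ y univ_nonempty
  refine ⟨w, ?_⟩
  have hμm := specMax_le_card G
  set μ := G.specMax
  set m : ℝ := (Fintype.card V : ℝ) with hmdef
  set d := ∑ v, ind G u v with hd
  set x := y w ^ 2 with hx
  have hm1 : 1 ≤ m := by rw [hmdef]; exact_mod_cast Fintype.card_pos (α := V)
  have hd0 : 0 ≤ d := sum_nonneg fun v _ => ind_nonneg G u v
  have hε1 : ε ≤ 1 := by nlinarith
  have hμ0 : 0 < μ := by nlinarith
  have hx0 : 0 ≤ x := sq_nonneg _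
  have hxle : ∀ v, x ≤ y v ^ 2 := fun v => pow_le_pow_left₀ (h0 w) (hw v (mem_univ v)) 2
  have hmx : m * x ≤ 1 := by
    rw [← h1, hmdef]
    have := card_nsmul_le_sum univ (fun v => y v ^ 2) x fun v _ => hxle v
    simpa using this
  have hmε : 32 ≤ m * ε := (div_le_iff₀ hε).1 hm
  have hxε : x ≤ ε / 32 := by nlinarith
  have hquad : x * (μ ^ 2 + d * (m - d)) ≤ d := by
    have hle : μ * y w ≤ ∑ v, ind G u v * y v :=
      (mul_le_mul_of_nonneg_left (hw u (mem_univ u)) hμ0.le).trans (h2 u)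
    have hsq := pow_le_pow_left₀ (mul_nonneg hμ0.le (h0 w)) hle 2
    have hCS := sum_mul_sq_le_sq_mul_sq univ (fun v => ind G u v) (fun v => ind G u v * y v)
    have e1 : ∀ v, ind G u v * (ind G u v * y v) = ind G u v * y v := fun v => by
      rw [← mul_assoc, ind_sq]
    have e2 : ∀ v, ind G u v ^ 2 = ind G u v := fun v => by rw [pow_two, ind_sq]
    simp only [e1, mul_pow, e2] at hCS
    have hout : (m - d) * x ≤ ∑ v, (1 - ind G u v) * y v ^ 2 := by
      have e : (m - d) * x = ∑ v, (1 - ind G u v) * x := by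
        rw [← sum_mul, sum_sub_distrib]; simp [hmdef, hd]
      rw [e]
      exact sum_le_sum fun v _ =>
        mul_le_mul_of_nonneg_left (hxle v) (by linarith [ind_le_one G u v])
    have e3 : ∑ v, (1 - ind G u v) * y v ^ 2 = 1 - ∑ v, ind G u v * y v ^ 2 := by
      simp only [sub_mul, one_mul, sum_sub_distrib, h1]
    have hin : ∑ v, ind G u v * y v ^ 2 ≤ 1 - (m - d) * x := by linarith
    have := mul_le_mul_of_nonneg_left hin hd0
    have e4 : (μ * y w) ^ 2 = μ ^ 2 * x := by rw [mul_pow]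
    nlinarith
  have hμx : μ * x ≤ t - ε / 16 := by
    set s := d / m with hs
    set ν := μ / m with hν
    have hsm : s * m = d := by rw [hs]; field_simp
    have hνm : ν * m = μ := by rw [hν]; field_simp
    have hs0 : 0 ≤ s := by positivity
    have hs1 : s ≤ t - ε := by rw [hs, div_le_iff₀ (by linarith)]; exact hu
    have hν1 : ν ≤ 1 := by rw [hν, div_le_one (by linarith)]; exact hμm
    have hνt : t - ε / 64 ≤ ν := by
      rw [hν, le_div_iff₀ (by linarith)]
      nlinarith
    have hν0 : 0 < ν := by positivity
    have ha := deletion_arith t ε s ν ht ht1 hε hs0 hs1 hνt hν1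
    have hP : 0 < ν ^ 2 + s * (1 - s) := by nlinarith [mul_nonneg hs0 (show 0 ≤ 1 - s by linarith)]
    have h5 : m * x * (ν ^ 2 + s * (1 - s)) ≤ s := by
      rw [← hsm, ← hνm] at hquad
      have : m * (m * x * (ν ^ 2 + s * (1 - s))) ≤ m * s := by nlinarith
      exact le_of_mul_le_mul_left this (by linarith)
    refine le_of_mul_le_mul_right (le_trans ?_ ha) hP
    have := mul_le_mul_of_nonneg_left h5 hν0.le
    rw [← hνm]
    linarith
  -- the restriction of `y` to the remaining vertices is the test vector
  set G' := G.comap (Function.Embedding.subtype fun v => v ≠ w)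
  have hR := rayleigh G' (fun v => y v)
  have hind : ∀ a b : {v // v ≠ w}, ind G' a b = ind G a b := fun a b => rfl
  simp only [hind] at hR
  have hsub : ∀ g : V → ℝ, ∑ a : {v // v ≠ w}, g a = ∑ v, g v - g w := fun g => by
    rw [← Fintype.sum_subtype_add_sum_subtype (fun v => v ≠ w) g]
    have : ∑ a : {v // ¬ v ≠ w}, g a = g w := by
      rw [Fintype.sum_eq_single (⟨w, by simp⟩ : {v // ¬ v ≠ w})]
      rintro ⟨a, ha⟩ hne
      exact absurd (Subtype.ext (not_not.1 ha)) hne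
    rw [this]; ring
  have hden : ∑ a : {v // v ≠ w}, y a ^ 2 = 1 - x := by rw [hsub fun v => y v ^ 2, h1]
  have hnum : ∑ a : {v // v ≠ w}, y a * ∑ b : {v // v ≠ w}, ind G a b * y b =
      μ - 2 * (μ * x) := by
    have e1 : ∀ a : {v // v ≠ w}, ∑ b : {v // v ≠ w}, ind G a b * y b =
        ∑ v, ind G a v * y v - ind G a w * y w := fun a => hsub fun v => ind G a v * y v
    simp only [e1]
    rw [hsub fun a => y a * (∑ v, ind G a v * y v - ind G a w * y w)]
    simp only [mul_sub, h3, sum_sub_distrib, ← mul_sum, h1]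
    have e2 : ∑ v, y v * (ind G v w * y w) = μ * x := by
      rw [← h3 w, mul_sum]
      exact sum_congr rfl fun v _ => by rw [ind_symm]; ring
    rw [e2, ind_self]
    ring
  rw [hden, hnum] at hR
  have h1x : 0 < 1 - x := by linarith
  refine le_of_mul_le_mul_right (le_trans ?_ hR) h1x
  nlinarith

/-! ### Iterated deletion -/

/-- The surplus `L` of `μ` over `t * m` grows by at least `ε / 64` with each deleted vertex while
`μ ≤ m`, so the quantity `ε / 64 * m + L`, which does not change, bounds the final order from
below. At the end the minimum degree is large, and Wilf's bound gives an `(r + 1)`-clique. -/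
lemma book_of_surplus (r : ℕ) (hr : 2 ≤ r) (ε : ℝ) (hε : ε = 1 / (4 * (r + 1))) (m : ℕ) :
    ∀ (V : Type) [Fintype V] [DecidableEq V] (G : SimpleGraph V) (L : ℝ), 0 ≤ L →
      Fintype.card V = m → (1 - 1 / (r : ℝ)) * m + L < G.specMax →
      32 / ε * (1 + ε / 64) ≤ ε / 64 * m + L →
      HasBook G r (ε * ((ε / 64 * m + L) / (1 + ε / 64))) := by
  have hr' : (2 : ℝ) ≤ r := by exact_mod_cast hr
  have hε0 : 0 < ε := by rw [hε]; positivity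
  have hrinv : 1 / (r : ℝ) ≤ 1 / 2 := one_div_le_one_div_of_le (by norm_num) hr'
  have hrinv0 : 0 < 1 / (r : ℝ) := by positivity
  induction m with
  | zero =>
    intro V _ _ G L hL hV hμ hQ
    have : IsEmpty V := Fintype.card_eq_zero_iff.1 hV
    have h0 : G.specMax = 0 := Real.iSup_of_isEmpty _
    rw [h0] at hμ
    simp at hμ
    linarith
  | succ m ih =>
    intro V _ _ G L hL hV hμ hQ
    have : Nonempty V := Fintype.card_pos_iff.1 (by omega)
    have hcard := specMax_le_card G
    rw [hV] at hcard
    set M : ℝ := ((m + 1 : ℕ) : ℝ) with hM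
    have hM0 : 0 < M := by positivity
    have hML : L ≤ M := by nlinarith
    have hQM : (ε / 64 * M + L) / (1 + ε / 64) ≤ M := by
      rw [div_le_iff₀ (by positivity)]; linarith
    have hM32 : 32 / ε ≤ M := by
      refine le_trans ?_ hQM
      rwa [le_div_iff₀ (by positivity)]
    by_cases hdeg : ∀ u, (1 - 1 / (r : ℝ) - ε) * M ≤ ∑ v, ind G u v
    · obtain ⟨K, hK⟩ : ∃ K, G.IsNClique (r + 1) K := by
        by_contra! h
        have := wilf G r hr h
        rw [hV] at this
        linarith
      have := book_of_clique G r hr K hK (by rw [hV, ← hε]; exact hdeg)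
      rw [hV, ← hε] at this
      exact this.mono (mul_le_mul_of_nonneg_left hQM hε0.le)
    · push Not at hdeg
      obtain ⟨u, hu⟩ := hdeg
      obtain ⟨w, hw⟩ := deletion G (1 - 1 / (r : ℝ)) ε (by linarith) (by linarith) hε0
        (by rw [hV]; exact hM32) (by rw [hV]; linarith) u (by rw [hV]; exact hu.le)
      have hMm : M = m + 1 := by rw [hM]; push_cast; rfl
      have key := ih {v // v ≠ w} (G.comap (Function.Embedding.subtype fun v => v ≠ w))
        (L + ε / 64) (by positivity)
        (by rw [Fintype.card_subtype_compl, hV]; simp)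
        (by rw [hMm] at hμ; linarith) (by rw [hMm] at hQ; linarith)
      have e : ε / 64 * M + L = ε / 64 * m + (L + ε / 64) := by rw [hMm]; ring
      rw [e]
      exact key.of_comap

end SpectralBook

open SpectralBook in
/-- For every `r ≥ 2` there is `c > 0` such that every graph `G` of sufficiently large
order `n` with `μ(G) > μ(T_r(n))` contains at least `c·n` distinct cliques of order
`r + 1` all sharing a common clique of order `r`. -/
theorem spectral_many_cliques_on_common_clique (r : ℕ) (hr : 2 ≤ r) :
    ∃ c : ℝ, 0 < c ∧ ∃ N : ℕ, ∀ n : ℕ, N ≤ n →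
      ∀ (V : Type) [Fintype V] [DecidableEq V] (G : SimpleGraph V),
        Fintype.card V = n →
        (SimpleGraph.turanGraph n r).specMax < G.specMax →
        ∃ (K : Finset V) (S : Finset (Finset V)), G.IsNClique r K ∧
          c * (n : ℝ) ≤ (S.card : ℝ) ∧ ∀ s ∈ S, G.IsNClique (r + 1) s ∧ K ⊆ s := by
  have hr' : (2 : ℝ) ≤ r := by exact_mod_cast hr
  have hrinv : 1 / (r : ℝ) ≤ 1 / 2 := one_div_le_one_div_of_le (by norm_num) hr'
  have hrinv0 : 0 < 1 / (r : ℝ) := by positivity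
  obtain ⟨ε, hε⟩ : ∃ ε : ℝ, ε = 1 / (4 * (r + 1)) := ⟨_, rfl⟩
  have hε0 : 0 < ε := by rw [hε]; positivity
  obtain ⟨N, hN⟩ := exists_nat_ge
    (32 / ε + r / (ε / 64) + 32 / ε * (1 + ε / 64) / (ε / 64) + 2)
  refine ⟨ε * (ε / 64 / (1 + ε / 64)) / 2, by positivity, N, ?_⟩
  intro n hn V _ _ G hV hμ
  change HasBook G r _
  have hnN : (N : ℝ) ≤ n := by exact_mod_cast hn
  have p1 : 0 < 32 / ε := by positivity
  have p2 : 0 < r / (ε / 64) := by positivity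
  have p3 : 0 < 32 / ε * (1 + ε / 64) / (ε / 64) := by positivity
  have hn2 : (2 : ℝ) ≤ n := by linarith
  have hn0 : 0 < n := by exact_mod_cast (by linarith : (0 : ℝ) < n)
  have : Nonempty V := Fintype.card_pos_iff.1 (by omega)
  have hrn : r / (n : ℝ) ≤ ε / 64 := by
    rw [div_le_iff₀ (by linarith), mul_comm, ← div_le_iff₀ (by positivity)]
    linarith
  have hQ : 32 / ε * (1 + ε / 64) ≤ ε / 64 * (n - 1) := by
    rw [mul_comm (ε / 64), ← div_le_iff₀ (by positivity)]
    linarith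
  have hlow := turan_lower n r hn0 hr
  have hμ1 : (1 - 1 / (r : ℝ)) * n - ε / 64 < G.specMax := by linarith
  have hfrac : ε / 64 / (1 + ε / 64) ≤ 1 := by
    rw [div_le_one (by positivity)]; linarith
  by_cases hdeg : ∀ u, (1 - 1 / (r : ℝ) - ε) * n ≤ ∑ v, ind G u v
  · obtain ⟨K, hK⟩ : ∃ K, G.IsNClique (r + 1) K := by
      by_contra! h
      have hpos : 0 < G.specMax := by
        have : ε ≤ 1 := by rw [hε, div_le_one (by positivity)]; linarith
        nlinarith
      have := spectral_turan G r hr h hpos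
      rw [hV] at this
      linarith
    have := book_of_clique G r hr K hK (by rw [hV, ← hε]; exact hdeg)
    rw [hV, ← hε] at this
    refine this.mono (mul_le_mul_of_nonneg_right ?_ (by linarith))
    nlinarith
  · push Not at hdeg
    obtain ⟨u, hu⟩ := hdeg
    obtain ⟨w, hw⟩ := deletion G (1 - 1 / (r : ℝ)) ε (by linarith) (by linarith) hε0
      (by rw [hV]; linarith) (by rw [hV]; linarith) u (by rw [hV]; exact hu.le)
    have hcast : ((n - 1 : ℕ) : ℝ) = n - 1 := by rw [Nat.cast_sub hn0, Nat.cast_one]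
    have key := book_of_surplus r hr ε hε (n - 1) {v // v ≠ w}
      (G.comap (Function.Embedding.subtype fun v => v ≠ w)) 0 le_rfl
      (by rw [Fintype.card_subtype_compl, hV]; simp)
      (by rw [hcast]; linarith) (by rw [hcast]; linarith)
    refine key.of_comap.mono ?_
    rw [hcast, add_zero]
    have e : ε * (ε / 64 * ((n : ℝ) - 1) / (1 + ε / 64)) =
        ε * (ε / 64 / (1 + ε / 64)) * (n - 1) := by ring
    rw [e]
    have : 0 < ε * (ε / 64 / (1 + ε / 64)) := by positivity
    nlinarith
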